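/- For every ν₀ ∈ (0, 1/2) there exist ε₀ > 0, C₁ > 0 and C(ν₀) > 0 such that for all ε ∈ (0, ε₀) and every continuously differentiable b̄₀ : [−1,1] → ℝ, setting b₀ = θ_{1,ε} b̄₀, one has Q₀(b₀) ≥ (1/2 − ν₀ − C₁ e^{−2α/ε}) ∫_{−1}^{1} θ_{1,ε}(r)² b̄₀'(r)² dr − C(ν₀) ε^{−2} e^{−2α/ε} ∫_{−1}^{1} θ_{1,ε}(r)² b̄₀(r)² dr. -/

import Mathlib

open Filter MeasureTheory

/-- `f_A(ρ) = (ρ² − a²)(ρ² − b²)(2ρ² − a² − b²) + 2((2ρ² − a² − b²)² + 2(ρ² − a²)(ρ² − b²))ρ²`. -/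
noncomputable def fA (a b ρ : ℝ) : ℝ :=
  (ρ ^ 2 - a ^ 2) * (ρ ^ 2 - b ^ 2) * (2 * ρ ^ 2 - a ^ 2 - b ^ 2)
    + 2 * ((2 * ρ ^ 2 - a ^ 2 - b ^ 2) ^ 2
        + 2 * (ρ ^ 2 - a ^ 2) * (ρ ^ 2 - b ^ 2)) * ρ ^ 2

/-- The quadratic form `Q₀(u) = ∫_{−1}^{1} (u'(r)² + ε⁻² f_A(ρ₀(r/ε)) u(r)²) dr`, written for
a function `u` with (weak) derivative `g`. -/
noncomputable def Q0 (a b ε : ℝ) (ρ₀ u g : ℝ → ℝ) : ℝ :=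
  ∫ r in (-1:ℝ)..1, ((g r) ^ 2 + (ε ^ 2)⁻¹ * fA a b (ρ₀ (r / ε)) * (u r) ^ 2)

/-!
Write `τ = ρ₀'`, so that `τ'' = f τ` with `f = f_A(ρ₀)`, and let `q = τ' / τ`, so `q' = f - q²`.
For `u = τ v` one has `u'² + f u² = τ² v'² + (q u²)'`, but `q u²` has the wrong sign at both ends of
a long interval. Replacing `q` by `q + p` repairs the boundary terms; completing the square in `v'`
then costs a factor `κ` of `∫ τ² v'²` and the term `(p' + 2 q p + p² / κ) τ² v²`. Near `+∞`, where
`q → -l`, the logistic solution of `p' = A p - p² / κ` makes this last term equal to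
`(A + 2 q) p τ² v²`: it is nonpositive near `+∞` if `A < 2 l`, and elsewhere `p` is as small as
`e^{-A T}` when the logistic step sits at `T`. The step can reach a height above `l` if `l < A κ`,
which is compatible with `A < 2 l` exactly when `κ > 1/2`; this is the origin of the constant `1/2`.
The end `-∞` is the mirror image, and the cross term in the square of the difference of the two
logistic solutions has the favourable sign.
-/

open Topology

/-- The factorization `-∂² + f = (-∂ - q) (∂ - q)` of a Schrödinger operator by means of a solution
`τ` of `τ'' = f τ` with logarithmic derivative `q`, written without division so that `τ` may
vanish. -/
structure IsSchrodingerFactorization (f τ q : ℝ → ℝ) : Prop where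
  hasDerivAt_solution : ∀ t, HasDerivAt τ (q t * τ t) t
  hasDerivAt_logDeriv : ∀ t, HasDerivAt q (f t - q t ^ 2) t

/-- A `C¹` function `p` with `p' + 2 q p + p² / κ ≤ E`. Adding `p` to the logarithmic derivative `q`
in a Schrödinger factorization shifts the boundary terms of the quadratic form, at the cost of a
factor `κ` in the gradient term and of the constant `E` in the zeroth order term. -/
structure IsRiccatiSubsolution (q : ℝ → ℝ) (κ E : ℝ) (p : ℝ → ℝ) : Prop where
  contDiff : ContDiff ℝ 1 p
  deriv_add_le : ∀ t, deriv p t + 2 * q t * p t + p t ^ 2 / κ ≤ E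

namespace IsSchrodingerFactorization

variable {f τ q : ℝ → ℝ}

lemma continuous_solution (h : IsSchrodingerFactorization f τ q) : Continuous τ :=
  continuous_iff_continuousAt.2 fun t => (h.hasDerivAt_solution t).continuousAt

lemma continuous_logDeriv (h : IsSchrodingerFactorization f τ q) : Continuous q :=
  continuous_iff_continuousAt.2 fun t => (h.hasDerivAt_logDeriv t).continuousAt

lemma comp_mul_left (h : IsSchrodingerFactorization f τ q) (c : ℝ) :
    IsSchrodingerFactorization (fun t => c ^ 2 * f (c * t)) (fun t => τ (c * t))
      (fun t => c * q (c * t)) where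
  hasDerivAt_solution t :=
    ((h.hasDerivAt_solution (c * t)).comp t (hasDerivAt_const_mul c)).congr_deriv (by ring)
  hasDerivAt_logDeriv t :=
    (((h.hasDerivAt_logDeriv (c * t)).comp t (hasDerivAt_const_mul c)).const_mul c).congr_deriv
      (by ring)

lemma hasDerivAt_solution_mul (h : IsSchrodingerFactorization f τ q) {v : ℝ → ℝ}
    (hv : Differentiable ℝ v) (t : ℝ) :
    HasDerivAt (fun t => τ t * v t) (q t * τ t * v t + τ t * deriv v t) t :=
  (h.hasDerivAt_solution t).mul (hv t).hasDerivAt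

lemma hasDerivAt_boundary_term (h : IsSchrodingerFactorization f τ q) {p v : ℝ → ℝ}
    (hp : Differentiable ℝ p) (hv : Differentiable ℝ v) (t : ℝ) :
    HasDerivAt (fun t => (q t + p t) * (τ t * v t) ^ 2)
      ((f t - q t ^ 2 + deriv p t) * (τ t * v t) ^ 2
        + (q t + p t) * (2 * (τ t * v t) * (q t * τ t * v t + τ t * deriv v t))) t := by
  have hsq := (h.hasDerivAt_solution_mul hv t).fun_pow 2
  exact (((h.hasDerivAt_logDeriv t).add (hp t).hasDerivAt).fun_mul hsq).congr_deriv
    (by simp only [Pi.add_apply]; norm_num)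

end IsSchrodingerFactorization

namespace IsRiccatiSubsolution

variable {q p : ℝ → ℝ} {κ E : ℝ}

lemma mono (h : IsRiccatiSubsolution q κ E p) {E' : ℝ} (hE : E ≤ E') :
    IsRiccatiSubsolution q κ E' p :=
  ⟨h.contDiff, fun t => (h.deriv_add_le t).trans hE⟩

lemma comp_mul_left (h : IsRiccatiSubsolution q κ E p) (c : ℝ) :
    IsRiccatiSubsolution (fun t => c * q (c * t)) κ (c ^ 2 * E) (fun t => c * p (c * t)) where
  contDiff := contDiff_const.mul (h.contDiff.comp (contDiff_const.mul contDiff_id))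
  deriv_add_le t := by
    rw [deriv_const_mul_field, deriv_comp_mul_left c p t, smul_eq_mul]
    calc _ = c ^ 2 * (deriv p (c * t) + 2 * q (c * t) * p (c * t) + p (c * t) ^ 2 / κ) := by ring
      _ ≤ c ^ 2 * E := by gcongr; exact h.deriv_add_le (c * t)

lemma sub_comp_neg {p₁ p₂ : ℝ → ℝ} {E₁ E₂ : ℝ} (hκ : 0 ≤ κ)
    (h₁ : IsRiccatiSubsolution q κ E₁ p₁)
    (h₂ : IsRiccatiSubsolution (fun t => -q (-t)) κ E₂ p₂)
    (hp₁ : ∀ t, 0 ≤ p₁ t) (hp₂ : ∀ t, 0 ≤ p₂ t) :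
    IsRiccatiSubsolution q κ (E₁ + E₂) (fun t => p₁ t - p₂ (-t)) where
  contDiff := h₁.contDiff.sub (h₂.contDiff.comp contDiff_neg)
  deriv_add_le t := by
    have hderiv : deriv (fun t => p₁ t - p₂ (-t)) t = deriv p₁ t + deriv p₂ (-t) := by
      have hp₂' : Differentiable ℝ fun t => p₂ (-t) :=
        h₂.contDiff.differentiable_one.comp differentiable_neg
      rw [deriv_fun_sub (h₁.contDiff.differentiable_one t) (hp₂' t), deriv_comp_neg, sub_neg_eq_add]
    have hsq : (p₁ t - p₂ (-t)) ^ 2 / κ ≤ p₁ t ^ 2 / κ + p₂ (-t) ^ 2 / κ := by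
      rw [← add_div]
      gcongr
      nlinarith [mul_nonneg (hp₁ t) (hp₂ (-t))]
    have h₂t := h₂.deriv_add_le (-t)
    rw [neg_neg] at h₂t
    rw [hderiv]
    linarith [h₁.deriv_add_le t]

end IsRiccatiSubsolution

/-- With `u = τ v` and `w = τ v'`, the difference of the two sides is
`κ (w - p u / κ)² + (E - p' - 2 q p - p² / κ) u²`. -/
lemma add_boundary_deriv_le_of_riccati {κ E p p' q : ℝ} (hκ : 0 < κ)
    (hE : p' + 2 * q * p + p ^ 2 / κ ≤ E) (f τ v v' : ℝ) :
    (1 - κ) * (τ ^ 2 * v' ^ 2) - E * (τ ^ 2 * v ^ 2)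
        + ((f - q ^ 2 + p') * (τ * v) ^ 2 + (q + p) * (2 * (τ * v) * (q * τ * v + τ * v')))
      ≤ (q * τ * v + τ * v') ^ 2 + f * (τ * v) ^ 2 := by
  have hsquare : 0 ≤ κ * (τ * v' - p * (τ * v) / κ) ^ 2 := by positivity
  have hzeroth : 0 ≤ (E - (p' + 2 * q * p + p ^ 2 / κ)) * (τ * v) ^ 2 :=
    mul_nonneg (sub_nonneg.2 hE) (sq_nonneg _)
  rw [← sub_nonneg]
  refine (add_nonneg hsquare hzeroth).trans_eq ?_
  field_simp
  ring

lemma integral_le_integral_of_add_deriv_le {F F' g k : ℝ → ℝ} {x y : ℝ} (hxy : x ≤ y)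
    (hF : ∀ r ∈ Set.uIcc x y, HasDerivAt F (F' r) r) (hF' : IntervalIntegrable F' volume x y)
    (hg : IntervalIntegrable g volume x y) (hk : IntervalIntegrable k volume x y)
    (hFxy : F x ≤ F y) (hle : ∀ r ∈ Set.Icc x y, g r + F' r ≤ k r) :
    ∫ r in x..y, g r ≤ ∫ r in x..y, k r :=
  calc ∫ r in x..y, g r
      ≤ (∫ r in x..y, g r) + ∫ r in x..y, F' r := by
        rw [intervalIntegral.integral_eq_sub_of_hasDerivAt hF hF']
        linarith
    _ = ∫ r in x..y, (g r + F' r) := (intervalIntegral.integral_add hg hF').symm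
    _ ≤ ∫ r in x..y, k r := intervalIntegral.integral_mono_on hxy (hg.add hF') hk hle

theorem IsSchrodingerFactorization.le_integral_of_isRiccatiSubsolution {f τ q p v : ℝ → ℝ}
    {κ E x y : ℝ} (h : IsSchrodingerFactorization f τ q) (hf : Continuous f) (hκ : 0 < κ)
    (hp : IsRiccatiSubsolution q κ E p) (hxy : x ≤ y) (hx : p x ≤ -q x) (hy : -q y ≤ p y)
    (hv : ContDiff ℝ 1 v) :
    (1 - κ) * (∫ r in x..y, τ r ^ 2 * deriv v r ^ 2) - E * (∫ r in x..y, τ r ^ 2 * v r ^ 2)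
      ≤ ∫ r in x..y, (deriv (fun r => τ r * v r) r ^ 2 + f r * (τ r * v r) ^ 2) := by
  have hτc := h.continuous_solution
  have hqc := h.continuous_logDeriv
  have hpc := hp.contDiff.continuous
  have hp'c := hp.contDiff.continuous_deriv_one
  have hvc := hv.continuous
  have hgrad : IntervalIntegrable (fun r => (1 - κ) * (τ r ^ 2 * deriv v r ^ 2)) volume x y :=
    Continuous.intervalIntegrable (by fun_prop) x y
  have hzeroth : IntervalIntegrable (fun r => E * (τ r ^ 2 * v r ^ 2)) volume x y :=
    Continuous.intervalIntegrable (by fun_prop) x y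
  have hboundary : (q x + p x) * (τ x * v x) ^ 2 ≤ (q y + p y) * (τ y * v y) ^ 2 :=
    (mul_nonpos_of_nonpos_of_nonneg (by linarith) (sq_nonneg _)).trans
      (mul_nonneg (by linarith) (sq_nonneg _))
  rw [← intervalIntegral.integral_const_mul, ← intervalIntegral.integral_const_mul,
    ← intervalIntegral.integral_sub hgrad hzeroth]
  simp only [(h.hasDerivAt_solution_mul hv.differentiable_one _).deriv]
  exact integral_le_integral_of_add_deriv_le hxy
    (fun r _ => h.hasDerivAt_boundary_term hp.contDiff.differentiable_one hv.differentiable_one r)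
    (Continuous.intervalIntegrable (by fun_prop) x y) (hgrad.sub hzeroth)
    (Continuous.intervalIntegrable (by fun_prop) x y) hboundary fun r _ =>
      add_boundary_deriv_le_of_riccati hκ (hp.deriv_add_le r) (f r) (τ r) (v r) (deriv v r)

/-- The solution of the logistic equation `p' = A p - p² / κ` that takes the value `A κ σ(c)` at
`T`, where `σ` is the sigmoid function. -/
noncomputable def logisticBarrier (A κ c T t : ℝ) : ℝ :=
  A * κ * Real.sigmoid (A * (t - T) + c)

lemma sigmoid_le_exp (x : ℝ) : Real.sigmoid x ≤ Real.exp x := by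
  have h := Real.sigmoid_mul_rexp_neg (-x)
  rw [neg_neg] at h
  rw [← h]
  exact mul_le_of_le_one_left (Real.exp_pos x).le (Real.sigmoid_le_one (-x))

section LogisticBarrier

variable {A κ : ℝ}

lemma logisticBarrier_self (A κ c T : ℝ) :
    logisticBarrier A κ c T T = A * κ * Real.sigmoid c := by
  simp [logisticBarrier]

lemma logisticBarrier_nonneg (hA : 0 ≤ A) (hκ : 0 ≤ κ) (c T t : ℝ) :
    0 ≤ logisticBarrier A κ c T t :=
  mul_nonneg (mul_nonneg hA hκ) (Real.sigmoid_nonneg _)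

lemma logisticBarrier_le_exp (hA : 0 ≤ A) (hκ : 0 ≤ κ) (c T t : ℝ) :
    logisticBarrier A κ c T t ≤ A * κ * Real.exp (A * (t - T) + c) :=
  mul_le_mul_of_nonneg_left (sigmoid_le_exp _) (mul_nonneg hA hκ)

lemma contDiff_logisticBarrier (A κ c T : ℝ) : ContDiff ℝ 1 (logisticBarrier A κ c T) :=
  contDiff_const.mul ((contDiff_sigmoid.of_le le_top).comp (by fun_prop))

lemma hasDerivAt_logisticBarrier (hκ : κ ≠ 0) (A c T t : ℝ) :
    HasDerivAt (logisticBarrier A κ c T)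
      (A * logisticBarrier A κ c T t - logisticBarrier A κ c T t ^ 2 / κ) t := by
  have haffine : HasDerivAt (fun t => A * (t - T) + c) A t := by
    simpa using (((hasDerivAt_id t).sub_const T).const_mul A).add_const c
  refine (((Real.hasDerivAt_sigmoid _).comp t haffine).const_mul (A * κ)).congr_deriv ?_
  simp only [logisticBarrier]
  field_simp

lemma tendsto_logisticBarrier_neg (hA : 0 < A) (κ c : ℝ) :
    Tendsto (fun T => logisticBarrier A κ c T (-T)) atTop (𝓝 0) := by
  have harg : Tendsto (fun T => A * (-T - T) + c) atTop atBot := by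
    refine tendsto_atBot_add_const_right _ c (Tendsto.const_mul_atBot hA ?_)
    exact tendsto_neg_atTop_atBot.atBot_add_atBot tendsto_neg_atTop_atBot
  simpa [logisticBarrier] using (Real.tendsto_sigmoid_atBot.comp harg).const_mul (A * κ)

theorem exists_isRiccatiSubsolution_logisticBarrier {q : ℝ → ℝ} {l : ℝ} (hA : 0 < A) (hκ : 0 < κ)
    (hAl : A < 2 * l) (hq : Tendsto q atTop (𝓝 (-l))) (hbdd : BddAbove (Set.range q)) (c : ℝ) :
    ∃ C > 0, ∀ T, IsRiccatiSubsolution q κ (C * Real.exp (-(A * T))) (logisticBarrier A κ c T) := by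
  obtain ⟨M, hM⟩ := hbdd
  have hqM : ∀ t, q t ≤ |M| := fun t => (hM ⟨t, rfl⟩).trans (le_abs_self M)
  obtain ⟨t₀, ht₀⟩ := eventually_atTop.1 (hq.eventually_lt_const (u := -(A / 2)) (by linarith))
  refine ⟨(A + 2 * |M|) * (A * κ * Real.exp (A * t₀ + c)), by positivity, fun T =>
    ⟨contDiff_logisticBarrier A κ c T, fun t => ?_⟩⟩
  have hp := logisticBarrier_nonneg hA.le hκ.le c T t
  have hRiccati : deriv (logisticBarrier A κ c T) t + 2 * q t * logisticBarrier A κ c T t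
      + logisticBarrier A κ c T t ^ 2 / κ = (A + 2 * q t) * logisticBarrier A κ c T t := by
    rw [(hasDerivAt_logisticBarrier hκ.ne' A c T t).deriv]
    ring
  rw [hRiccati]
  rcases le_total t₀ t with hright | hleft
  · have hneg : A + 2 * q t ≤ 0 := by linarith [ht₀ t hright]
    exact (mul_nonpos_of_nonpos_of_nonneg hneg hp).trans (by positivity)
  · calc (A + 2 * q t) * logisticBarrier A κ c T t
        ≤ (A + 2 * |M|) * (A * κ * Real.exp (A * (t - T) + c)) := by
          gcongr
          · exact hqM t
          · exact logisticBarrier_le_exp hA.le hκ.le c T t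
      _ ≤ (A + 2 * |M|) * (A * κ * Real.exp (A * (t₀ - T) + c)) := by gcongr
      _ = _ := by
        rw [show A * (t₀ - T) + c = A * t₀ + c + -(A * T) by ring, Real.exp_add]
        ring

end LogisticBarrier

lemma exists_logistic_rate_and_shift {l α κ : ℝ} (hl : 0 < l) (hαl : α < l) (hκ : 1 / 2 < κ) :
    ∃ A c, 0 < A ∧ 2 * α < A ∧ A < 2 * l ∧ l < A * κ * Real.sigmoid c := by
  have hκ₀ : 0 < κ := by linarith
  have hlκ : l / κ < 2 * l := by rw [div_lt_iff₀ hκ₀]; nlinarith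
  obtain ⟨A, hA, hAl⟩ := exists_between (max_lt (by linarith : 2 * α < 2 * l) hlκ)
  obtain ⟨hαA, hlA⟩ := max_lt_iff.1 hA
  have hA₀ : 0 < A := (div_pos hl hκ₀).trans hlA
  have hlim : Tendsto (fun c => A * κ * Real.sigmoid c) atTop (𝓝 (A * κ)) := by
    simpa using Real.tendsto_sigmoid_atTop.const_mul (A * κ)
  obtain ⟨c, hc⟩ := (hlim.eventually_const_lt ((div_lt_iff₀ hκ₀).1 hlA)).exists
  exact ⟨A, c, hA₀, hαA, hAl, hc⟩

lemma bddAbove_range_of_tendsto_atBot_atTop {q : ℝ → ℝ} (hq : Continuous q) {x y : ℝ}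
    (hbot : Tendsto q atBot (𝓝 x)) (htop : Tendsto q atTop (𝓝 y)) : BddAbove (Set.range q) :=
  (hq.isBounded_range_iff_isBigO_atTop_atBot.2
    ⟨htop.isBigO_one ℝ, hbot.isBigO_one ℝ⟩).bddAbove

theorem exists_eventually_isRiccatiSubsolution {q : ℝ → ℝ} {l₁ l₂ α κ : ℝ} (hq : Continuous q)
    (hl₁ : 0 < l₁) (hl₂ : 0 < l₂) (hα₁ : α < l₁) (hα₂ : α < l₂) (hκ : 1 / 2 < κ)
    (hbot : Tendsto q atBot (𝓝 l₁)) (htop : Tendsto q atTop (𝓝 (-l₂))) :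
    ∃ C > 0, ∀ᶠ T in atTop, ∃ p, IsRiccatiSubsolution q κ (C * Real.exp (-2 * α * T)) p ∧
      p (-T) ≤ -q (-T) ∧ -q T ≤ p T := by
  have hκ₀ : 0 < κ := by linarith
  obtain ⟨A₁, c₁, hA₁, hαA₁, hAl₁, hc₁⟩ := exists_logistic_rate_and_shift hl₁ hα₁ hκ
  obtain ⟨A₂, c₂, hA₂, hαA₂, hAl₂, hc₂⟩ := exists_logistic_rate_and_shift hl₂ hα₂ hκ
  have hqneg : Tendsto (fun t => q (-t)) atTop (𝓝 l₁) := hbot.comp tendsto_neg_atTop_atBot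
  have hrefl : Tendsto (fun t => -q (-t)) atBot (𝓝 (- -l₂)) :=
    (htop.comp tendsto_neg_atBot_atTop).neg
  obtain ⟨C₁, hC₁, hsub₁⟩ := exists_isRiccatiSubsolution_logisticBarrier hA₁ hκ₀ hAl₁ hqneg.neg
    (bddAbove_range_of_tendsto_atBot_atTop (by fun_prop) hrefl hqneg.neg) c₁
  obtain ⟨C₂, hC₂, hsub₂⟩ := exists_isRiccatiSubsolution_logisticBarrier hA₂ hκ₀ hAl₂ htop
    (bddAbove_range_of_tendsto_atBot_atTop hq hbot htop) c₂
  have hleft : ∀ᶠ T in atTop,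
      logisticBarrier A₂ κ c₂ T (-T) - A₁ * κ * Real.sigmoid c₁ < -q (-T) :=
    ((tendsto_logisticBarrier_neg hA₂ κ c₂).sub_const _).eventually_lt hqneg.neg (by linarith)
  have hright : ∀ᶠ T in atTop,
      -q T < A₂ * κ * Real.sigmoid c₂ - logisticBarrier A₁ κ c₁ T (-T) :=
    htop.neg.eventually_lt ((tendsto_logisticBarrier_neg hA₁ κ c₁).const_sub _) (by linarith)
  refine ⟨C₂ + C₁, by positivity, ?_⟩
  filter_upwards [hleft, hright, eventually_ge_atTop 0] with T hT₁ hT₂ hT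
  have hsub := (hsub₂ T).sub_comp_neg hκ₀.le (hsub₁ T)
    (logisticBarrier_nonneg hA₂.le hκ₀.le c₂ T) (logisticBarrier_nonneg hA₁.le hκ₀.le c₁ T)
  refine ⟨_, hsub.mono ?_, ?_, ?_⟩
  · rw [add_mul]
    gcongr <;> nlinarith
  · rw [neg_neg, logisticBarrier_self]
    exact hT₁.le
  · rw [logisticBarrier_self]
    exact hT₂.le

theorem IsSchrodingerFactorization.exists_eventually_le_integral {f τ q : ℝ → ℝ}
    {l₁ l₂ α ν : ℝ} (h : IsSchrodingerFactorization f τ q) (hf : Continuous f)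
    (hl₁ : 0 < l₁) (hl₂ : 0 < l₂) (hα₁ : α < l₁) (hα₂ : α < l₂) (hν : 0 < ν)
    (hbot : Tendsto q atBot (𝓝 l₁)) (htop : Tendsto q atTop (𝓝 (-l₂))) :
    ∃ C > 0, ∀ᶠ T in atTop, ∀ v : ℝ → ℝ, ContDiff ℝ 1 v →
      (1 / 2 - ν) * (∫ r in (-1 : ℝ)..1, τ (T * r) ^ 2 * deriv v r ^ 2)
          - C * T ^ 2 * Real.exp (-2 * α * T) * (∫ r in (-1 : ℝ)..1, τ (T * r) ^ 2 * v r ^ 2)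
        ≤ ∫ r in (-1 : ℝ)..1, (deriv (fun r => τ (T * r) * v r) r ^ 2
            + T ^ 2 * f (T * r) * (τ (T * r) * v r) ^ 2) := by
  obtain ⟨C, hC, hsub⟩ := exists_eventually_isRiccatiSubsolution (κ := 1 / 2 + ν)
    h.continuous_logDeriv hl₁ hl₂ hα₁ hα₂ (by linarith) hbot htop
  refine ⟨C, hC, ?_⟩
  filter_upwards [hsub, eventually_ge_atTop 0] with T ⟨p, hp, hleft, hright⟩ hT v hv
  have key := (h.comp_mul_left T).le_integral_of_isRiccatiSubsolution (by fun_prop)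
    (by linarith) (hp.comp_mul_left T) (x := -1) (y := 1) (by norm_num)
    (by simpa using mul_le_mul_of_nonneg_left hleft hT)
    (by simpa using mul_le_mul_of_nonneg_left hright hT) hv
  convert key using 3 <;> ring

/-- The logarithmic derivative `ρ'' / ρ'` of the derivative of a solution of the profile equation
`ρ' = (√2/2) (ρ² - a²) (b² - ρ²)`, as a function of `ρ`. -/
noncomputable def profileLogDeriv (a b ρ : ℝ) : ℝ :=
  -(Real.sqrt 2 * ρ * (2 * ρ ^ 2 - a ^ 2 - b ^ 2))

section Profile

variable {a b : ℝ} {ρ₀ : ℝ → ℝ}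

lemma continuous_fA (a b : ℝ) : Continuous (fA a b) := by
  unfold fA
  fun_prop

lemma continuous_profileLogDeriv (a b : ℝ) : Continuous (profileLogDeriv a b) := by
  unfold profileLogDeriv
  fun_prop

lemma profileLogDeriv_left (a b : ℝ) :
    profileLogDeriv a b a = Real.sqrt 2 * (b ^ 2 - a ^ 2) * a := by
  unfold profileLogDeriv
  ring

lemma profileLogDeriv_right (a b : ℝ) :
    profileLogDeriv a b b = -(Real.sqrt 2 * (b ^ 2 - a ^ 2) * b) := by
  unfold profileLogDeriv
  ring

lemma isSchrodingerFactorization_profile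
    (hρ : ∀ z, HasDerivAt ρ₀ (Real.sqrt 2 / 2 * (ρ₀ z ^ 2 - a ^ 2) * (b ^ 2 - ρ₀ z ^ 2)) z) :
    IsSchrodingerFactorization (fun z => fA a b (ρ₀ z)) (deriv ρ₀)
      (fun z => profileLogDeriv a b (ρ₀ z)) where
  hasDerivAt_solution z := by
    rw [funext fun z => (hρ z).deriv]
    refine (((((hρ z).fun_pow 2).sub_const (a ^ 2)).const_mul (Real.sqrt 2 / 2)).fun_mul
      (((hρ z).fun_pow 2).const_sub (b ^ 2))).congr_deriv ?_
    simp only [profileLogDeriv]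
    push_cast
    ring
  hasDerivAt_logDeriv z := by
    refine (((hρ z).const_mul (Real.sqrt 2)).fun_mul
      (((((hρ z).fun_pow 2).const_mul 2).sub_const (a ^ 2)).sub_const
        (b ^ 2))).fun_neg.congr_deriv ?_
    simp only [profileLogDeriv, fA]
    push_cast
    ring_nf
    rw [Real.sq_sqrt zero_le_two]
    ring

end Profile

theorem statement15_general (a b α : ℝ) (ha : 0 < a) (hab : a < b)
    (hα : α < min (Real.sqrt 2 * (b ^ 2 - a ^ 2) * a) (Real.sqrt 2 * (b ^ 2 - a ^ 2) * b))
    (ρ₀ : ℝ → ℝ)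
    (hρ : ∀ z, HasDerivAt ρ₀ (Real.sqrt 2 / 2 * (ρ₀ z ^ 2 - a ^ 2) * (b ^ 2 - ρ₀ z ^ 2)) z)
    (hbot : Tendsto ρ₀ atBot (𝓝 a)) (htop : Tendsto ρ₀ atTop (𝓝 b)) (ν₀ : ℝ) (hν₀ : 0 < ν₀) :
    ∃ ε₀ > (0 : ℝ), ∃ C > (0 : ℝ), ∀ ε ∈ Set.Ioo 0 ε₀, ∀ v : ℝ → ℝ, ContDiff ℝ 1 v →
      Q0 a b ε ρ₀ (fun r => deriv ρ₀ (r / ε) * v r) (deriv (fun r => deriv ρ₀ (r / ε) * v r)) ≥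
        (1 / 2 - ν₀) * (∫ r in (-1 : ℝ)..1, deriv ρ₀ (r / ε) ^ 2 * deriv v r ^ 2)
          - C * (ε ^ 2)⁻¹ * Real.exp (-2 * α / ε)
            * (∫ r in (-1 : ℝ)..1, deriv ρ₀ (r / ε) ^ 2 * v r ^ 2) := by
  obtain ⟨hαa, hαb⟩ := lt_min_iff.1 hα
  have hb : 0 < b := ha.trans hab
  have hgap : 0 < b ^ 2 - a ^ 2 := sub_pos.2 (pow_lt_pow_left₀ hab ha.le two_ne_zero)
  have hρc : Continuous ρ₀ := continuous_iff_continuousAt.2 fun z => (hρ z).continuousAt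
  have hqbot : Tendsto (fun z => profileLogDeriv a b (ρ₀ z)) atBot
      (𝓝 (Real.sqrt 2 * (b ^ 2 - a ^ 2) * a)) := by
    rw [← profileLogDeriv_left]
    exact ((continuous_profileLogDeriv a b).tendsto a).comp hbot
  have hqtop : Tendsto (fun z => profileLogDeriv a b (ρ₀ z)) atTop
      (𝓝 (-(Real.sqrt 2 * (b ^ 2 - a ^ 2) * b))) := by
    rw [← profileLogDeriv_right]
    exact ((continuous_profileLogDeriv a b).tendsto b).comp htop
  obtain ⟨C, hC, hev⟩ := (isSchrodingerFactorization_profile hρ).exists_eventually_le_integral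
    ((continuous_fA a b).comp hρc) (by positivity) (by positivity) hαa hαb hν₀ hqbot hqtop
  obtain ⟨ε₀, hε₀, hsmall⟩ :=
    mem_nhdsGT_iff_exists_Ioo_subset.1 (tendsto_inv_nhdsGT_zero.eventually hev)
  refine ⟨ε₀, hε₀, C, hC, fun ε hε v hv => ?_⟩
  have hexp : -2 * α / ε = -2 * α * ε⁻¹ := div_eq_mul_inv _ _
  have hscale : ∀ r, r / ε = ε⁻¹ * r := fun r => div_eq_inv_mul r ε
  rw [hexp]
  simpa only [Q0, hscale, inv_pow] using hsmall hε v hv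

/-- For every `ν₀ ∈ (0, 1/2)` there exist `ε₀, C₁, C(ν₀) > 0` such that
for all `ε ∈ (0, ε₀)` and every `C¹` function `b̄₀`, with `b₀ = θ_{1,ε} b̄₀`
(`θ_{1,ε}(r) = ρ₀'(r/ε)`),
`Q₀(b₀) ≥ (1/2 − ν₀ − C₁ e^{−2α/ε}) ∫ θ_{1,ε}² (b̄₀')² − C(ν₀) ε⁻² e^{−2α/ε} ∫ θ_{1,ε}² b̄₀²`. -/
theorem statement15 (a b α : ℝ) (ha : 0 < a) (hab : a < b)
    (hα : 0 < α)
    (hα' : α < min (Real.sqrt 2 * (b ^ 2 - a ^ 2) * a) (Real.sqrt 2 * (b ^ 2 - a ^ 2) * b))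
    (ρ₀ : ℝ → ℝ) (hreg : ContDiff ℝ 1 ρ₀)
    (hderiv : ∀ z, deriv ρ₀ z =
      Real.sqrt 2 / 2 * ((ρ₀ z) ^ 2 - a ^ 2) * (b ^ 2 - (ρ₀ z) ^ 2))
    (hbnd : ∀ z, a < ρ₀ z ∧ ρ₀ z < b)
    (hbot : Filter.Tendsto ρ₀ Filter.atBot (nhds a))
    (htop : Filter.Tendsto ρ₀ Filter.atTop (nhds b))
    (hnorm : b * Real.log ((ρ₀ 0 - a) / (ρ₀ 0 + a))
      - a * Real.log ((b - ρ₀ 0) / (b + ρ₀ 0)) = 0)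
    (ν₀ : ℝ) (hν₀ : ν₀ ∈ Set.Ioo (0:ℝ) (1/2)) :
    ∃ ε₀ > (0:ℝ), ∃ C₁ > (0:ℝ), ∃ C > (0:ℝ), ∀ ε ∈ Set.Ioo (0:ℝ) ε₀,
      ∀ b₀bar : ℝ → ℝ, ContDiff ℝ 1 b₀bar →
        Q0 a b ε ρ₀ (fun r => deriv ρ₀ (r / ε) * b₀bar r)
            (deriv (fun r => deriv ρ₀ (r / ε) * b₀bar r)) ≥
          (1/2 - ν₀ - C₁ * Real.exp (-2 * α / ε))
              * (∫ r in (-1:ℝ)..1, (deriv ρ₀ (r / ε)) ^ 2 * (deriv b₀bar r) ^ 2)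
            - C * (ε ^ 2)⁻¹ * Real.exp (-2 * α / ε)
              * (∫ r in (-1:ℝ)..1, (deriv ρ₀ (r / ε)) ^ 2 * (b₀bar r) ^ 2) := by
  obtain ⟨ε₀, hε₀, C, hC, h⟩ := statement15_general a b α ha hab hα' ρ₀
    (fun z => hderiv z ▸ (hreg.differentiable_one z).hasDerivAt) hbot htop ν₀ hν₀.1
  exact ⟨ε₀, hε₀, 1, one_pos, C, hC, fun ε hε v hv => (h ε hε v hv).trans' <| sub_le_sub_right
    (mul_le_mul_of_nonneg_right (sub_le_self _ (mul_pos one_pos (Real.exp_pos _)).le)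
      (intervalIntegral.integral_nonneg (by norm_num) fun r _ => by positivity)) _⟩
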